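/- For k = 9 and every deterministic online algorithm A for bin packing with cardinality constraint k, the asymptotic competitive ratio of A is at least 189/124: for every ε > 0 and every N there exists an input L with OPT(L) ≥ N and A(L) ≥ (189/124 − ε)·OPT(L). -/

import Mathlib

/-!
The adversary uses four item sizes, `0.010`, `0.143`, `0.334` and `0.501` (just above `1/105`, `1/7`,
`1/3` and `1/2`), presented in this order in four phases of `36 M`, `72 M`, `72 M` and `72 M` items;
it may stop after any phase.

*Offline.* After the four phases the items fit into `4 M`, `12 M`, `36 M` and `72 M` bins, with
contents at most (by number of items of each size) `(9,0,0,0)`, `(3,6,0,0)`, `(1,2,2,0)` and `(1,1,1,1)`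
respectively (`opt_le`). These numbers sum to `124 M`.

*Online.* Give the items the weights `1, 2, 4, 4`, of total `756 M = 4 * 189 M`. A feasible bin first
used in phase `1, 2, 3, 4` has weight at most `16, 12, 8, 4`, that is, four times the number of phases
at whose end it is open. Summing over the bins, the numbers of bins used by the algorithm at the ends
of the four phases sum to at least `189 M` (`online_sum`). Hence at the end of some phase the ratio
is at least `189 / 124`; all these instances have large optimum because a bin holds at most 9 items.
-/

open scoped Classical
noncomputable section

/-- An input is a list of item sizes, each in (0,1]. -/
def ValidInput (L : List ℝ) : Prop := ∀ x ∈ L, 0 < x ∧ x ≤ 1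

/-- A packing assigns a bin index to each item; it is feasible for cardinality
constraint `k` if every bin receives at most `k` items of total size at most 1. -/
def IsFeasible (k : ℕ) (L : List ℝ) (f : Fin L.length → ℕ) : Prop :=
  ∀ b : ℕ,
    (Finset.univ.filter (fun i => f i = b)).card ≤ k ∧
    ∑ i ∈ Finset.univ.filter (fun i => f i = b), L.get i ≤ 1

/-- The number of bins used by a packing. -/
def binsUsed (L : List ℝ) (f : Fin L.length → ℕ) : ℕ :=
  (Finset.univ.image f).card

/-- The optimal (minimum) number of bins in a feasible packing of `L`. -/
def OPT (k : ℕ) (L : List ℝ) : ℕ :=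
  sInf {n | ∃ f : Fin L.length → ℕ, IsFeasible k L f ∧ binsUsed L f = n}

/-- A deterministic online algorithm is a strategy: given the items seen so far
(ending with the item to be packed), it returns the bin index for that item. -/
def onlinePacking (A : List ℝ → ℕ) (L : List ℝ) : Fin L.length → ℕ :=
  fun i => A (L.take (i.1 + 1))

/-- The strategy `A` is a valid online algorithm for cardinality constraint `k`
if on every valid input the induced packing is feasible. -/
def OnlineValid (k : ℕ) (A : List ℝ → ℕ) : Prop :=
  ∀ L : List ℝ, ValidInput L → IsFeasible k L (onlinePacking A L)

/-- The number of bins used by online algorithm `A` on input `L`. -/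
def onlineBins (A : List ℝ → ℕ) (L : List ℝ) : ℕ :=
  binsUsed L (onlinePacking A L)

/-- The state of First Fit: a list of open bins (in order of opening),
each recorded as (number of items, total size). `ffFind` returns the index of
the first bin that can receive an item of size `x` (it has at most `k-1` items
and the item fits); if none, the index of a new bin. -/
def ffFind (k : ℕ) (x : ℝ) : List (ℕ × ℝ) → ℕ
  | [] => 0
  | b :: bs => if b.1 < k ∧ b.2 + x ≤ 1 then 0 else ffFind k x bs + 1

/-- Update the First Fit state after packing an item of size `x`. -/
def ffUpdate (k : ℕ) (x : ℝ) : List (ℕ × ℝ) → List (ℕ × ℝ)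
  | [] => [(1, x)]
  | b :: bs =>
      if b.1 < k ∧ b.2 + x ≤ 1 then (b.1 + 1, b.2 + x) :: bs
      else b :: ffUpdate k x bs

/-- The final state of First Fit with cardinality constraint `k` on input `L`. -/
def ffState (k : ℕ) (L : List ℝ) : List (ℕ × ℝ) :=
  L.foldl (fun bs x => ffUpdate k x bs) []

/-- The number of bins used by First Fit with cardinality constraint `k` on `L`. -/
def FF (k : ℕ) (L : List ℝ) : ℕ := (ffState k L).length

/-- The bin index into which First Fit packs the `i`-th item of `L`. -/
def ffAssign (k : ℕ) (L : List ℝ) (i : Fin L.length) : ℕ :=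
  ffFind k (L.get i) (ffState k (L.take i.1))

/-- Indicator of the interval `[a, b)`, with values in `ℕ`. -/
def ind (a b i : ℕ) : ℕ := if a ≤ i ∧ i < b then 1 else 0

/-- Size of the `i`-th item (counting from 0) of the adversarial sequence, in thousandths. Items with
index at least `252 * M` are never presented; they get the junk value `1`, a legal size. -/
def milliSize (M i : ℕ) : ℕ :=
  if i < 36 * M then 10 else if i < 108 * M then 143 else if i < 180 * M then 334
  else if i < 252 * M then 501 else 1

/-- The first `n` items of the adversarial sequence. -/
def advList (M n : ℕ) : List ℝ := (List.range n).map (fun i => (milliSize M i : ℝ) / 1000)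

lemma advList_length (M n : ℕ) : (advList M n).length = n := by simp [advList]

lemma advList_valid (M n : ℕ) : ValidInput (advList M n) := by
  intro x hx
  simp only [advList, List.mem_map, List.mem_range] at hx
  obtain ⟨i, _, rfl⟩ := hx
  unfold milliSize
  split_ifs <;> norm_num

lemma advList_take (M n i : ℕ) (h : i ≤ n) : (advList M n).take i = advList M i := by
  simp [advList, ← List.map_take, List.take_range, h]

/-- Sums over the item positions of `advList M n` are sums over `Finset.range n`. -/
lemma sum_positions {β : Type*} [AddCommMonoid β] (M n : ℕ) (p : ℕ → Prop) [DecidablePred p]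
    (h : ℕ → β) :
    ∑ i ∈ Finset.univ.filter (fun i : Fin (advList M n).length => p i), h i
      = ∑ i ∈ (Finset.range n).filter p, h i := by
  rw [Finset.sum_filter, Finset.sum_filter,
    Fin.sum_univ_eq_sum_range (fun i => if p i then h i else 0), advList_length]

/-- Feasibility of a packing of `advList M n` in integer arithmetic. -/
lemma feasible_iff (M n : ℕ) (g : ℕ → ℕ) :
    IsFeasible 9 (advList M n) (fun i => g i) ↔
      ∀ b, ((Finset.range n).filter (fun i => g i = b)).card ≤ 9 ∧
        ∑ i ∈ (Finset.range n).filter (fun i => g i = b), milliSize M i ≤ 1000 := by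
  unfold IsFeasible
  refine forall_congr' fun b => and_congr ?_ ?_
  · rw [Finset.card_eq_sum_ones, Finset.card_eq_sum_ones,
      sum_positions M n (fun i => g i = b) (fun _ => 1)]
  · have h1 : ∀ i : Fin (advList M n).length,
        (advList M n).get i = (milliSize M i : ℝ) / 1000 := by
      intro i
      rw [List.get_eq_getElem]
      simp [advList]
    simp only [h1]
    rw [sum_positions M n (fun i => g i = b) (fun i => (milliSize M i : ℝ) / 1000),
      ← Finset.sum_div, div_le_one (by norm_num)]
    norm_cast

lemma binsUsed_eq (M n : ℕ) (g : ℕ → ℕ) :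
    binsUsed (advList M n) (fun i => g i) = ((Finset.range n).image g).card := by
  unfold binsUsed
  congr 1
  ext b
  simp only [Finset.mem_image, Finset.mem_univ, true_and, Finset.mem_range]
  constructor
  · rintro ⟨i, rfl⟩
    exact ⟨i, by simpa [advList_length] using i.2, rfl⟩
  · rintro ⟨i, hi, rfl⟩
    exact ⟨⟨i, by simpa [advList_length] using hi⟩, rfl⟩

lemma onlinePacking_eq (A : List ℝ → ℕ) (M n : ℕ) :
    onlinePacking A (advList M n) = fun i : Fin (advList M n).length => A (advList M (i.1 + 1)) := by
  funext i
  have hi : i.1 < n := i.2.trans_eq (advList_length M n)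
  simp only [onlinePacking]
  rw [advList_take M n _ hi]

/-! ### Item counts of a bin -/

/-- Number of items with index in `[a, b)` among the positions `F`. -/
def cnt (a b : ℕ) (F : Finset ℕ) : ℕ := ∑ i ∈ F, ind a b i

lemma card_eq_cnt (M n : ℕ) (hn : n ≤ 252 * M) (F : Finset ℕ) (hF : ∀ i ∈ F, i < n) :
    F.card = cnt 0 (36 * M) F + cnt (36 * M) (108 * M) F + cnt (108 * M) (180 * M) F
      + cnt (180 * M) (252 * M) F := by
  unfold cnt
  rw [Finset.card_eq_sum_ones, ← Finset.sum_add_distrib, ← Finset.sum_add_distrib,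
    ← Finset.sum_add_distrib]
  refine Finset.sum_congr rfl fun i hi => ?_
  have := hF i hi
  unfold ind
  split_ifs <;> omega

lemma size_eq_cnt (M n : ℕ) (hn : n ≤ 252 * M) (F : Finset ℕ) (hF : ∀ i ∈ F, i < n) :
    ∑ i ∈ F, milliSize M i = 10 * cnt 0 (36 * M) F + 143 * cnt (36 * M) (108 * M) F
      + 334 * cnt (108 * M) (180 * M) F + 501 * cnt (180 * M) (252 * M) F := by
  unfold cnt
  rw [Finset.mul_sum, Finset.mul_sum, Finset.mul_sum, Finset.mul_sum, ← Finset.sum_add_distrib,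
    ← Finset.sum_add_distrib, ← Finset.sum_add_distrib]
  refine Finset.sum_congr rfl fun i hi => ?_
  have := hF i hi
  unfold ind milliSize
  split_ifs <;> omega

lemma cnt_eq_zero (a b : ℕ) (F : Finset ℕ) (h : ∀ i ∈ F, b ≤ i) : cnt a b F = 0 := by
  unfold cnt
  refine Finset.sum_eq_zero fun i hi => ?_
  have := h i hi
  unfold ind
  split_ifs <;> omega

/-- If the items of a block starting at `a` are packed `q` to a bin, in order, then each bin gets at
most `q` of them. The case `q = 0` covers blocks that have not started yet. -/
lemma cnt_le (a e q b n : ℕ) (g : ℕ → ℕ) (hq : 0 < q ∨ n ≤ a)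
    (hg : ∀ i, a ≤ i → i < e → g i = (i - a) / q) :
    cnt a e ((Finset.range n).filter (fun i => g i = b)) ≤ q := by
  unfold cnt ind
  rw [← Finset.sum_filter, ← Finset.card_eq_sum_ones]
  rcases hq with hq | hq
  · calc _ ≤ (Finset.Ico (a + b * q) (a + b * q + q)).card := by
          refine Finset.card_le_card fun i hi => ?_
          simp only [Finset.mem_filter, Finset.mem_range] at hi
          obtain ⟨⟨_, h1⟩, h2, h3⟩ := hi
          rw [hg i h2 h3, Nat.div_eq_iff hq] at h1
          rw [Finset.mem_Ico]
          omega
      _ = q := by simp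
  · rw [Finset.card_eq_zero.2]
    · exact Nat.zero_le _
    · ext i
      simp only [Finset.mem_filter, Finset.mem_range, Finset.notMem_empty, iff_false]
      omega

/-! ### The optimum -/

/-- The packing that puts the `j`-th item of phase `c` into bin `j / q_c`. -/
def blockPacking (M q₀ q₁ q₂ q₃ i : ℕ) : ℕ :=
  if i < 36 * M then i / q₀ else if i < 108 * M then (i - 36 * M) / q₁
  else if i < 180 * M then (i - 108 * M) / q₂ else (i - 180 * M) / q₃

/-- If a bin may hold `q₀, q₁, q₂, q₃` items of the four sizes and `K` such bins have room for the
first `n` items, then the optimum is at most `K`. -/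
lemma opt_le (M n K q₀ q₁ q₂ q₃ : ℕ) (hn : n ≤ 252 * M)
    (h0 : 0 < q₀ ∨ n ≤ 0) (h1 : 0 < q₁ ∨ n ≤ 36 * M) (h2 : 0 < q₂ ∨ n ≤ 108 * M)
    (h3 : 0 < q₃ ∨ n ≤ 180 * M) (hc : q₀ + q₁ + q₂ + q₃ ≤ 9)
    (hs : 10 * q₀ + 143 * q₁ + 334 * q₂ + 501 * q₃ ≤ 1000)
    (hK : ∀ i < n, blockPacking M q₀ q₁ q₂ q₃ i < K) :
    OPT 9 (advList M n) ≤ K := by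
  set g := blockPacking M q₀ q₁ q₂ q₃ with hg
  have hf : IsFeasible 9 (advList M n) (fun i => g i) := by
    rw [feasible_iff]
    intro b
    have hF : ∀ i ∈ (Finset.range n).filter (fun i => g i = b), i < n := by
      intro i hi
      simp only [Finset.mem_filter, Finset.mem_range] at hi
      exact hi.1
    rw [card_eq_cnt M n hn _ hF, size_eq_cnt M n hn _ hF]
    have c0 := cnt_le 0 (36 * M) q₀ b n g h0 (fun i _ hi' => by simp [hg, blockPacking, hi'])
    have c1 := cnt_le (36 * M) (108 * M) q₁ b n g h1 (fun i hi hi' => by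
      simp [hg, blockPacking, hi', show ¬ i < 36 * M by omega])
    have c2 := cnt_le (108 * M) (180 * M) q₂ b n g h2 (fun i hi hi' => by
      simp [hg, blockPacking, hi', show ¬ i < 36 * M by omega, show ¬ i < 108 * M by omega])
    have c3 := cnt_le (180 * M) (252 * M) q₃ b n g h3 (fun i hi hi' => by
      simp [hg, blockPacking, show ¬ i < 36 * M by omega, show ¬ i < 108 * M by omega,
        show ¬ i < 180 * M by omega])
    omega
  calc OPT 9 (advList M n) ≤ binsUsed (advList M n) (fun i => g i) := Nat.sInf_le ⟨_, hf, rfl⟩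
    _ = ((Finset.range n).image g).card := binsUsed_eq M n g
    _ ≤ (Finset.range K).card := by
        refine Finset.card_le_card fun b hb => ?_
        simp only [Finset.mem_image, Finset.mem_range] at hb ⊢
        obtain ⟨i, hi, rfl⟩ := hb
        exact hK i hi
    _ = K := Finset.card_range K

/-- A bin holds at most 9 items. The algorithm `A` only serves to show that some feasible packing
exists, so that `OPT` is an attained minimum. -/
lemma le_opt (A : List ℝ → ℕ) (hA : OnlineValid 9 A) (L : List ℝ) (hL : ValidInput L) :
    L.length ≤ 9 * OPT 9 L := by
  have hne : {n | ∃ f : Fin L.length → ℕ, IsFeasible 9 L f ∧ binsUsed L f = n}.Nonempty :=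
    ⟨_, _, hA L hL, rfl⟩
  obtain ⟨f, hf, hn⟩ := Nat.sInf_mem hne
  have h := Finset.card_le_mul_card_image (f := f) Finset.univ 9 (fun b _ => (hf b).1)
  rw [Finset.card_univ, Fintype.card_fin] at h
  exact h.trans (Nat.mul_le_mul_left 9 hn.le)

/-! ### The online algorithm -/

/-- The weighting argument: a bin contributes to the left side the weight of its content, and to the
right side `4` for every phase at whose end it is open. -/
lemma online_sum (M : ℕ) (g : ℕ → ℕ)
    (hg : ∀ b, ((Finset.range (252 * M)).filter (fun i => g i = b)).card ≤ 9 ∧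
      ∑ i ∈ (Finset.range (252 * M)).filter (fun i => g i = b), milliSize M i ≤ 1000) :
    189 * M ≤ ((Finset.range (36 * M)).image g).card + ((Finset.range (108 * M)).image g).card
      + ((Finset.range (180 * M)).image g).card + ((Finset.range (252 * M)).image g).card := by
  set B : ℕ → Finset ℕ := fun n => (Finset.range n).image g with hB
  set w : ℕ → ℕ := fun i => ind 0 (36 * M) i + 2 * ind (36 * M) (108 * M) i
    + 4 * ind (108 * M) (180 * M) i + 4 * ind (180 * M) (252 * M) i with hw
  have hwsum : ∀ F : Finset ℕ, ∑ i ∈ F, w i = cnt 0 (36 * M) F + 2 * cnt (36 * M) (108 * M) F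
      + 4 * cnt (108 * M) (180 * M) F + 4 * cnt (180 * M) (252 * M) F := by
    intro F
    simp only [hw, cnt, Finset.sum_add_distrib, Finset.mul_sum]
  have hblock : ∀ a e : ℕ, e ≤ 252 * M → cnt a e (Finset.range (252 * M)) = e - a := by
    intro a e he
    unfold cnt ind
    rw [← Finset.sum_filter, ← Finset.card_eq_sum_ones, ← Nat.card_Ico]
    congr 1
    ext i
    simp only [Finset.mem_filter, Finset.mem_range, Finset.mem_Ico]
    omega
  have htotal : ∑ i ∈ Finset.range (252 * M), w i = 756 * M := by
    rw [hwsum, hblock _ _ (by omega), hblock _ _ (by omega), hblock _ _ (by omega),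
      hblock _ _ (by omega)]
    omega
  have hfib : ∑ b ∈ B (252 * M), ∑ i ∈ (Finset.range (252 * M)).filter (fun i => g i = b), w i
      = 756 * M := by
    rw [← htotal]
    exact Finset.sum_fiberwise_of_maps_to (fun i hi => Finset.mem_image_of_mem g hi) w
  have hbin : ∀ b ∈ B (252 * M),
      ∑ i ∈ (Finset.range (252 * M)).filter (fun i => g i = b), w i
        ≤ 4 * ((if b ∈ B (36 * M) then 1 else 0) + (if b ∈ B (108 * M) then 1 else 0)
          + (if b ∈ B (180 * M) then 1 else 0) + (if b ∈ B (252 * M) then 1 else 0)) := by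
    intro b hb
    obtain ⟨k1, k2⟩ := hg b
    rw [hwsum]
    have hF : ∀ i ∈ (Finset.range (252 * M)).filter (fun i => g i = b), i < 252 * M := by
      intro i hi
      simp only [Finset.mem_filter, Finset.mem_range] at hi
      exact hi.1
    rw [card_eq_cnt M _ le_rfl _ hF] at k1
    rw [size_eq_cnt M _ le_rfl _ hF] at k2
    -- A bin that is not open at the end of a phase has no items of that phase.
    have hz : ∀ a e, b ∉ B e →
        cnt a e ((Finset.range (252 * M)).filter (fun i => g i = b)) = 0 := by
      intro a e hbe
      refine cnt_eq_zero _ _ _ fun i hi => ?_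
      simp only [Finset.mem_filter, Finset.mem_range] at hi
      by_contra hlt
      exact hbe (Finset.mem_image.2 ⟨i, Finset.mem_range.2 (by omega), hi.2⟩)
    have hmono : ∀ m n, m ≤ n → b ∈ B m → b ∈ B n := fun m n hmn h =>
      Finset.image_subset_image (Finset.range_mono hmn) h
    have m1 := hmono (36 * M) (108 * M) (by omega)
    have m2 := hmono (108 * M) (180 * M) (by omega)
    have z0 := hz 0 (36 * M)
    have z1 := hz (36 * M) (108 * M)
    have z2 := hz (108 * M) (180 * M)
    generalize cnt 0 (36 * M) _ = x0 at *
    generalize cnt (36 * M) (108 * M) _ = x1 at *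
    generalize cnt (108 * M) (180 * M) _ = x2 at *
    generalize cnt (180 * M) (252 * M) _ = x3 at *
    have b3 : x3 ≤ 1 := by omega
    have b2 : x2 ≤ 2 := by omega
    have b1 : x1 ≤ 6 := by omega
    rw [if_pos hb]
    by_cases t0 : b ∈ B (36 * M)
    · rw [if_pos t0, if_pos (m1 t0), if_pos (m2 (m1 t0))]
      interval_cases x3 <;> interval_cases x2 <;> omega
    · have := z0 t0
      by_cases t1 : b ∈ B (108 * M)
      · rw [if_neg t0, if_pos t1, if_pos (m2 t1)]
        interval_cases x3 <;> interval_cases x2 <;> omega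
      · have := z1 t1
        by_cases t2 : b ∈ B (180 * M)
        · rw [if_neg t0, if_neg t1, if_pos t2]
          omega
        · have := z2 t2
          rw [if_neg t0, if_neg t1, if_neg t2]
          omega
  have hcard : ∀ n ≤ 252 * M,
      ∑ b ∈ B (252 * M), (if b ∈ B n then 1 else 0) = (B n).card := by
    intro n hn
    rw [← Finset.sum_filter, ← Finset.card_eq_sum_ones, Finset.filter_mem_eq_inter,
      Finset.inter_eq_right.2]
    exact Finset.image_subset_image (Finset.range_mono hn)
  have hfinal := Finset.sum_le_sum hbin
  rw [hfib, ← Finset.mul_sum, Finset.sum_add_distrib, Finset.sum_add_distrib,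
    Finset.sum_add_distrib, hcard _ (by omega), hcard _ (by omega), hcard _ (by omega),
    hcard _ le_rfl] at hfinal
  change 189 * M ≤ (B _).card + (B _).card + (B _).card + (B _).card
  omega

/-- For k = 9, the asymptotic competitive ratio of every deterministic
online algorithm is at least 189/124. -/
theorem online_asymp_lb_k9 (A : List ℝ → ℕ) (hA : OnlineValid 9 A) :
    ∀ ε : ℝ, 0 < ε → ∀ N : ℕ, ∃ L : List ℝ, ValidInput L ∧ N ≤ OPT 9 L ∧
      ((189 / 124 : ℝ) - ε) * (OPT 9 L : ℝ) ≤ (onlineBins A L : ℝ) := by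
  intro ε hε N
  obtain ⟨M, hM⟩ : ∃ M, M = N + 1 := ⟨_, rfl⟩
  have hvalid := hA _ (advList_valid M (252 * M))
  rw [onlinePacking_eq] at hvalid
  have honline := online_sum M _
    ((feasible_iff M (252 * M) (fun i => A (advList M (i + 1)))).1 hvalid)
  have hbins : ∀ n, onlineBins A (advList M n)
      = ((Finset.range n).image (fun i => A (advList M (i + 1)))).card := by
    intro n
    rw [onlineBins, onlinePacking_eq]
    exact binsUsed_eq M n (fun i => A (advList M (i + 1)))
  simp only [← hbins] at honline
  have o1 : OPT 9 (advList M (36 * M)) ≤ 4 * M := by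
    refine opt_le M _ _ 9 0 0 0 ?_ ?_ ?_ ?_ ?_ ?_ ?_ ?_ <;> try omega
    intro i hi
    unfold blockPacking
    split_ifs <;> omega
  have o2 : OPT 9 (advList M (108 * M)) ≤ 12 * M := by
    refine opt_le M _ _ 3 6 0 0 ?_ ?_ ?_ ?_ ?_ ?_ ?_ ?_ <;> try omega
    intro i hi
    unfold blockPacking
    split_ifs <;> omega
  have o3 : OPT 9 (advList M (180 * M)) ≤ 36 * M := by
    refine opt_le M _ _ 1 2 2 0 ?_ ?_ ?_ ?_ ?_ ?_ ?_ ?_ <;> try omega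
    intro i hi
    unfold blockPacking
    split_ifs <;> omega
  have o4 : OPT 9 (advList M (252 * M)) ≤ 72 * M := by
    refine opt_le M _ _ 1 1 1 1 ?_ ?_ ?_ ?_ ?_ ?_ ?_ ?_ <;> try omega
    intro i hi
    unfold blockPacking
    split_ifs <;> omega
  have hlarge : ∀ n, 36 * M ≤ n → N ≤ OPT 9 (advList M n) := by
    intro n hn
    have := le_opt A hA _ (advList_valid M n)
    rw [advList_length] at this
    omega
  by_contra! hcon
  have c1 := hcon _ (advList_valid M (36 * M)) (hlarge _ le_rfl)
  have c2 := hcon _ (advList_valid M (108 * M)) (hlarge _ (by omega))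
  have c3 := hcon _ (advList_valid M (180 * M)) (hlarge _ (by omega))
  have c4 := hcon _ (advList_valid M (252 * M)) (hlarge _ (by omega))
  have hM0 : (0 : ℝ) < M := by rw [hM]; positivity
  have honline' : (189 * M : ℝ) ≤ onlineBins A (advList M (36 * M))
      + onlineBins A (advList M (108 * M)) + onlineBins A (advList M (180 * M))
      + onlineBins A (advList M (252 * M)) := by exact_mod_cast honline
  have hopt : (OPT 9 (advList M (36 * M)) + OPT 9 (advList M (108 * M))
      + OPT 9 (advList M (180 * M)) + OPT 9 (advList M (252 * M)) : ℝ) ≤ 124 * M := by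
    have := add_le_add (add_le_add (add_le_add (Nat.cast_le (α := ℝ).2 o1)
      (Nat.cast_le (α := ℝ).2 o2)) (Nat.cast_le (α := ℝ).2 o3)) (Nat.cast_le (α := ℝ).2 o4)
    push_cast at this
    linarith
  -- A negative factor would make the required inequality trivial.
  have hr : 0 ≤ (189 / 124 : ℝ) - ε := by
    by_contra! hneg
    have := mul_nonpos_of_nonpos_of_nonneg hneg.le
      (Nat.cast_nonneg (α := ℝ) (OPT 9 (advList M (36 * M))))
    have := Nat.cast_nonneg (α := ℝ) (onlineBins A (advList M (36 * M)))
    linarith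
  have hmul := mul_le_mul_of_nonneg_left hopt hr
  have : 0 < ε * M := mul_pos hε hM0
  nlinarith
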